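/- Let W be a uniformly random word from the set C_n. With probability 1 − 2^{−Ω(√n)}, the total weight of the non-dominant loop blocks in the prefix decomposition of W is smaller than √n. -/

import Mathlib

open Filter Asymptotics
open scoped Classical

/-- An embedding order on words over a weighted alphabet. -/
structure EmbeddingOrder (A : Type*) (w : A → ℕ) where
  le : List A → List A → Prop
  le_refl : ∀ W, le W W
  le_trans : ∀ {U V W}, le U V → le V W → le U W
  le_antisymm : ∀ {V W}, le V W → le W V → V = W
  nil_le : ∀ W, le [] W
  weight_lt : ∀ {W V}, le W V → W ≠ V → (W.map w).sum < (V.map w).sum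
  le_iff_factor : ∀ W V, le W V ↔ ∃ Ws : List (List A),
    Ws.length = V.length ∧ Ws.flatten = W ∧ ∀ q ∈ Ws.zip V, le q.1 [q.2]

namespace EmbeddingOrder

variable {A : Type*} {w : A → ℕ} (E : EmbeddingOrder A w) {f : ℕ} (φ : Fin f → List A)

/-- The weight of a word: the sum of the weights of its letters. -/
def wt (w : A → ℕ) (W : List A) : ℕ := (W.map w).sum

/-- The class `C = A* ∩ Av(φ¹,…,φ^f)` of all words avoiding every forbidden word. -/
def Cset : Set (List A) := {W | ∀ i, ¬ E.le (φ i) W}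

/-- The prefix state of `W`: its `i`-th component is the length of the longest prefix
of the forbidden word `φ i` contained in `W`. -/
noncomputable def pstate (W : List A) : Fin f → ℕ := fun i =>
  sSup {p | p ≤ (φ i).length ∧ E.le ((φ i).take p) W}

/-- The suffix state of `W`: its `i`-th component is the length of the longest suffix
of the forbidden word `φ i` contained in `W`. -/
noncomputable def sstate (W : List A) : Fin f → ℕ := fun i =>
  sSup {p | p ≤ (φ i).length ∧ E.le ((φ i).drop ((φ i).length - p)) W}

/-- A prefix state `p` and a suffix state `s` *overlap* if `p i + s i ≥ ℓ_i` for some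
`i` (equivalently, `XY ∉ C` whenever `X` has prefix state `p` and `Y` suffix state `s`);
otherwise they are *compatible*. -/
def POverlap (p s : Fin f → ℕ) : Prop := ∃ i, (φ i).length ≤ p i + s i

/-- The (prefix) loop alphabet of a state `p`: the letters whose appending does not
change the prefix state `p`. -/
def stateLoopP (p : Fin f → ℕ) : Set A :=
  {a | ∀ X : List A, E.pstate φ X = p → E.pstate φ (X ++ [a]) = p}

/-- The suffix loop alphabet of a state `s`: the letters whose prepending does not
change the suffix state `s`. -/
def stateLoopS (s : Fin f → ℕ) : Set A :=
  {a | ∀ Y : List A, E.sstate φ Y = s → E.sstate φ (a :: Y) = s}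

/-- `p'` is a *prefix successor* of `p`: `p' ≠ p` and some letter is a transition
symbol from `p` to `p'`. -/
def PSucc (p p' : Fin f → ℕ) : Prop :=
  p ≠ p' ∧ ∃ b : A, ∀ X : List A, E.pstate φ X = p → E.pstate φ (X ++ [b]) = p'

/-- `s'` is a *suffix successor* of `s`. -/
def SSucc (s s' : Fin f → ℕ) : Prop :=
  s ≠ s' ∧ ∃ b : A, ∀ Y : List A, E.sstate φ Y = s → E.sstate φ (b :: Y) = s'

/-- Compatible states `p` (prefix) and `s` (suffix) *match* if every prefix successor
of `p` overlaps with `s` and every suffix successor of `s` overlaps with `p`. -/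
def Matches (p s : Fin f → ℕ) : Prop :=
  ¬ POverlap φ p s ∧ (∀ p', E.PSucc φ p p' → POverlap φ p' s) ∧
    ∀ s', E.SSucc φ s s' → POverlap φ p s'

/-- `ρ(S)`: the unique positive root of `1 − Σ_{a∈S} x^{weight a}` for a nonempty set
`S` of letters (realised as a supremum). -/
noncomputable def rhoOf (w : A → ℕ) (S : Set A) : ℝ :=
  sSup {x : ℝ | 0 ≤ x ∧ ∑' a : S, x ^ w (a : A) ≤ 1}

/-- The growth rate of `S*`: the reciprocal `ρ(S)⁻¹` of the positive root of
`1 − Σ_{a∈S} x^{weight a}`. -/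
noncomputable def growthOf (w : A → ℕ) (S : Set A) : ℝ := (rhoOf w S)⁻¹

/-- The dominant growth rate `γ` of the class: the largest growth rate of the loop
alphabet of a (reachable) prefix state. -/
noncomputable def gammaC : ℝ :=
  sSup {g : ℝ | ∃ X ∈ E.Cset φ, g = growthOf w (E.stateLoopP φ (E.pstate φ X))}

/-- The number of dominant loop blocks (equivalently, dominant states) in the prefix
decomposition of `W`. -/
noncomputable def domCountP (W : List A) : ℕ :=
  Set.ncard {p : Fin f → ℕ | (∃ j ≤ W.length, E.pstate φ (W.take j) = p) ∧
    growthOf w (E.stateLoopP φ p) = E.gammaC φ}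

/-- The number of dominant loop blocks (equivalently, dominant states) in the suffix
decomposition of `W`. -/
noncomputable def domCountS (W : List A) : ℕ :=
  Set.ncard {s : Fin f → ℕ | (∃ j ≤ W.length, E.sstate φ (W.drop j) = s) ∧
    growthOf w (E.stateLoopS φ s) = E.gammaC φ}

/-- `D`: the largest number of dominant states appearing on a single prefix transition
path of a word of the class. -/
noncomputable def Dmax : ℕ := sSup {d : ℕ | ∃ W ∈ E.Cset φ, E.domCountP φ W = d}

end EmbeddingOrder

namespace EmbeddingOrder

variable {A : Type*} {w : A → ℕ} (E : EmbeddingOrder A w) {f : ℕ} (φ : Fin f → List A)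

/-- The total weight of the non-dominant loop blocks in the prefix decomposition of
`W`: the sum of the weights of the letters of `W` that are loop symbols whose current
state has non-dominant loop alphabet. -/
noncomputable def nondomWtP (W : List A) : ℕ :=
  ∑ i : Fin W.length,
    if E.pstate φ (W.take ((i : ℕ) + 1)) = E.pstate φ (W.take (i : ℕ)) ∧
        growthOf w (E.stateLoopP φ (E.pstate φ (W.take (i : ℕ)))) ≠ E.gammaC φ
      then w (W.get i) else 0

end EmbeddingOrder

open EmbeddingOrder

/-!
Put `ρ = γ⁻¹`. The generating function of the words over a dominant loop alphabet has radius of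
convergence `ρ`, and these words can all be appended to one word of `C`; since `C` is closed
downwards, `|C_n|` is at least a constant times `γ ^ n`.

For the upper bound, give a word `W` of `C` the weight `ρ ^ weight(W)`, with an extra factor `η` per
unit of weight in the non-dominant loop blocks. At a dominant state the loop symbols together
contribute `Σ ρ ^ weight(a) = 1`; at a non-dominant state `Σ ρ ^ weight(a) < 1`, so some `η > 1`
still keeps `Σ (η ρ) ^ weight(a) ≤ 1`. Hence only the transitions can increase the total weight as
letters are appended. As their number is bounded by a constant `K`, discounting each of them by
`t = 1 / (n + 1)` makes one step cost at most a factor `1 + |A| t`, hence `n` steps a constant, and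
loses only `t ^ (-K)`. So the words with non-dominant weight at least `s` form a fraction
`O(n ^ (K + 1) η ^ (-s))` of `C_n`, and at `s = √n` the power of `η` absorbs the polynomial.
-/

namespace EmbeddingOrder

section Words

variable {A : Type*} {w : A → ℕ}

lemma wt_cons (a : A) (W : List A) : wt w (a :: W) = w a + wt w W := by
  simp [wt]

lemma wt_append (U V : List A) : wt w (U ++ V) = wt w U + wt w V := by
  simp [wt]

lemma length_le_wt (hw : ∀ a, 0 < w a) (W : List A) : W.length ≤ wt w W := by
  induction W with
  | nil => simp
  | cons a W ih =>
    rw [List.length_cons, wt_cons]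
    have := hw a
    omega

lemma finite_setOf_wt_eq [Finite A] (hw : ∀ a, 0 < w a) (n : ℕ) :
    {W : List A | wt w W = n}.Finite :=
  (List.finite_length_le A n).subset fun W hW ↦ (length_le_wt hw W).trans (le_of_eq hW)

variable [Fintype A] {g : List A → ℝ} {r : ℝ}

lemma sum_le_pow_mul_of_length_eq (hg : ∀ W, 0 ≤ g W) (hr : 0 ≤ r)
    (hstep : ∀ W, ∑ a, g (W ++ [a]) ≤ r * g W) {m : ℕ} {B : Finset (List A)}
    (hB : ∀ W ∈ B, W.length = m) : ∑ W ∈ B, g W ≤ r ^ m * g [] := by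
  induction m generalizing B with
  | zero =>
    have hsub : B ⊆ {[]} := fun W hW ↦ by simpa using hB W hW
    simpa using Finset.sum_le_sum_of_subset_of_nonneg hsub fun W _ _ ↦ hg W
  | succ m ih =>
    have hfiber : ∀ V ∈ B.image List.dropLast,
        ∑ W ∈ B with W.dropLast = V, g W ≤ ∑ a, g (V ++ [a]) := by
      intro V _
      rw [← Finset.sum_image (g := fun a ↦ V ++ [a]) (f := g)
        (fun a _ b _ h ↦ by simpa using h)]
      refine Finset.sum_le_sum_of_subset_of_nonneg (fun W hW ↦ ?_) fun W _ _ ↦ hg W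
      obtain ⟨hWB, rfl⟩ := Finset.mem_filter.1 hW
      have hne : W ≠ [] := List.ne_nil_of_length_eq_add_one (hB W hWB)
      exact Finset.mem_image.2 ⟨W.getLast hne, Finset.mem_univ _, List.dropLast_append_getLast hne⟩
    have hlength : ∀ V ∈ B.image List.dropLast, V.length = m := by
      simp only [Finset.mem_image]
      rintro V ⟨W, hW, rfl⟩
      simp [hB W hW]
    calc ∑ W ∈ B, g W
        = ∑ V ∈ B.image List.dropLast, ∑ W ∈ B with W.dropLast = V, g W :=
          (Finset.sum_fiberwise_of_maps_to (fun W hW ↦ Finset.mem_image_of_mem _ hW) g).symm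
      _ ≤ ∑ V ∈ B.image List.dropLast, r * g V :=
          Finset.sum_le_sum fun V hV ↦ (hfiber V hV).trans (hstep V)
      _ ≤ r * (r ^ m * g []) := by rw [← Finset.mul_sum]; gcongr; exact ih hlength
      _ = r ^ (m + 1) * g [] := by ring

lemma sum_le_mul_pow_mul_of_length_le (hg : ∀ W, 0 ≤ g W) (hr : 1 ≤ r)
    (hstep : ∀ W, ∑ a, g (W ++ [a]) ≤ r * g W) {n : ℕ} {B : Finset (List A)}
    (hB : ∀ W ∈ B, W.length ≤ n) : ∑ W ∈ B, g W ≤ (n + 1) * (r ^ n * g []) := by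
  have hmaps : ∀ W ∈ B, W.length ∈ Finset.range (n + 1) := fun W hW ↦ by
    simpa [Nat.lt_succ_iff] using hB W hW
  calc ∑ W ∈ B, g W = ∑ m ∈ Finset.range (n + 1), ∑ W ∈ B with W.length = m, g W :=
        (Finset.sum_fiberwise_of_maps_to hmaps g).symm
    _ ≤ ∑ _ ∈ Finset.range (n + 1), r ^ n * g [] := by
        refine Finset.sum_le_sum fun m hm ↦ ?_
        have hmn : m ≤ n := Nat.lt_succ_iff.1 (Finset.mem_range.1 hm)
        calc ∑ W ∈ B with W.length = m, g W ≤ r ^ m * g [] :=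
              sum_le_pow_mul_of_length_eq hg (by linarith) hstep fun W hW ↦
                (Finset.mem_filter.1 hW).2
          _ ≤ r ^ n * g [] := by gcongr; exact hg []
    _ = (n + 1) * (r ^ n * g []) := by simp

end Words

section GrowthRate

variable {A : Type*} {w : A → ℕ} {S : Set A}

-- Every `x ≥ 0` satisfies the condition defining `ρ(∅)`, so its supremum is the junk value `0`.
@[simp]
lemma growthOf_empty : growthOf w (∅ : Set A) = 0 := by
  have hset : {x : ℝ | 0 ≤ x ∧ ∑' a : (∅ : Set A), x ^ w (a : A) ≤ 1} = Set.Ici 0 := by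
    ext x
    simp
  rw [growthOf, rhoOf, hset, Real.sSup_of_not_bddAbove (not_bddAbove_Ici 0), inv_zero]

lemma growthOf_nonneg : 0 ≤ growthOf w S :=
  inv_nonneg.2 (Real.sSup_nonneg fun _ hx ↦ hx.1)

section Fintype

variable [Fintype A]

/-- The weight enumerator `Σ_{a∈S} x^{weight a}` of a set of letters: `ρ(S)` is where it takes the
value `1`. -/
noncomputable def weightEnumerator (w : A → ℕ) (S : Set A) (x : ℝ) : ℝ :=
  ∑ a with a ∈ S, x ^ w a

lemma tsum_pow_eq_weightEnumerator (S : Set A) (x : ℝ) :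
    ∑' a : S, x ^ w (a : A) = weightEnumerator w S x := by
  rw [tsum_subtype S (fun a ↦ x ^ w a), tsum_fintype, weightEnumerator, Finset.sum_filter]
  simp only [Set.indicator_apply]

@[simp]
lemma weightEnumerator_empty (x : ℝ) : weightEnumerator w ∅ x = 0 := by
  simp [weightEnumerator]

lemma weightEnumerator_zero (hw : ∀ a, 0 < w a) : weightEnumerator w S 0 = 0 :=
  Finset.sum_eq_zero fun a _ ↦ zero_pow (hw a).ne'

lemma one_le_weightEnumerator_one (hS : S.Nonempty) : 1 ≤ weightEnumerator w S 1 := by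
  obtain ⟨a, ha⟩ := hS
  simpa [weightEnumerator] using Nat.one_le_iff_ne_zero.2 <|
    Finset.card_ne_zero_of_mem (s := Finset.univ.filter (· ∈ S)) (a := a) (by simpa using ha)

lemma continuous_weightEnumerator : Continuous (weightEnumerator w S) := by
  unfold weightEnumerator
  fun_prop

lemma strictMonoOn_weightEnumerator (hw : ∀ a, 0 < w a) (hS : S.Nonempty) :
    StrictMonoOn (weightEnumerator w S) (Set.Ici 0) := by
  intro x hx y _ hxy
  obtain ⟨a, ha⟩ := hS
  exact Finset.sum_lt_sum_of_nonempty ⟨a, by simpa using ha⟩ fun b _ ↦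
    pow_lt_pow_left₀ hxy hx (hw b).ne'

lemma exists_weightEnumerator_eq_one (hw : ∀ a, 0 < w a) (hS : S.Nonempty) :
    ∃ x ∈ Set.Ioc (0 : ℝ) 1, weightEnumerator w S x = 1 := by
  obtain ⟨x, hx, hx1⟩ := intermediate_value_Icc (zero_le_one (α := ℝ))
    (continuous_weightEnumerator (w := w) (S := S)).continuousOn
    ⟨(weightEnumerator_zero hw).trans_le zero_le_one, one_le_weightEnumerator_one hS⟩
  refine ⟨x, ⟨hx.1.lt_of_ne ?_, hx.2⟩, hx1⟩
  rintro rfl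
  simp [weightEnumerator_zero hw] at hx1

lemma rhoOf_eq_of_weightEnumerator_eq_one (hw : ∀ a, 0 < w a) (hS : S.Nonempty) {x : ℝ}
    (hx : 0 ≤ x) (hx1 : weightEnumerator w S x = 1) : rhoOf w S = x := by
  have hgreatest : IsGreatest {y : ℝ | 0 ≤ y ∧ ∑' a : S, y ^ w (a : A) ≤ 1} x := by
    simp only [tsum_pow_eq_weightEnumerator, ← hx1]
    exact ⟨⟨hx, le_rfl⟩, fun y hy ↦
      ((strictMonoOn_weightEnumerator hw hS).le_iff_le hy.1 hx).1 hy.2⟩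
  exact hgreatest.csSup_eq

lemma weightEnumerator_rhoOf (hw : ∀ a, 0 < w a) (hS : S.Nonempty) :
    weightEnumerator w S (rhoOf w S) = 1 := by
  obtain ⟨x, hx, hx1⟩ := exists_weightEnumerator_eq_one hw hS
  rwa [rhoOf_eq_of_weightEnumerator_eq_one hw hS hx.1.le hx1]

end Fintype

lemma rhoOf_mem_Ioc [Finite A] (hw : ∀ a, 0 < w a) (hS : S.Nonempty) :
    rhoOf w S ∈ Set.Ioc (0 : ℝ) 1 := by
  cases nonempty_fintype A
  obtain ⟨x, hx, hx1⟩ := exists_weightEnumerator_eq_one hw hS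
  rwa [rhoOf_eq_of_weightEnumerator_eq_one hw hS hx.1.le hx1]

lemma one_le_growthOf [Finite A] (hw : ∀ a, 0 < w a) (hS : S.Nonempty) : 1 ≤ growthOf w S := by
  cases nonempty_fintype A
  exact (one_le_inv₀ (rhoOf_mem_Ioc hw hS).1).2 (rhoOf_mem_Ioc hw hS).2

section Fintype

variable [Fintype A]

lemma weightEnumerator_inv_le_one (hw : ∀ a, 0 < w a) {γ : ℝ} (hγ : 0 < γ)
    (h : growthOf w S ≤ γ) : weightEnumerator w S γ⁻¹ ≤ 1 := by
  rcases S.eq_empty_or_nonempty with rfl | hS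
  · simp
  have hle : γ⁻¹ ≤ rhoOf w S := inv_le_of_inv_le₀ (rhoOf_mem_Ioc hw hS).1 h
  exact ((strictMonoOn_weightEnumerator hw hS).monotoneOn (inv_pos.2 hγ).le
    (rhoOf_mem_Ioc hw hS).1.le hle).trans_eq (weightEnumerator_rhoOf hw hS)

lemma weightEnumerator_inv_lt_one (hw : ∀ a, 0 < w a) {γ : ℝ} (h : growthOf w S < γ) :
    weightEnumerator w S γ⁻¹ < 1 := by
  have hγ : 0 < γ := growthOf_nonneg.trans_lt h
  rcases S.eq_empty_or_nonempty with rfl | hS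
  · simp
  have hlt : γ⁻¹ < rhoOf w S := inv_lt_of_inv_lt₀ (rhoOf_mem_Ioc hw hS).1 h
  exact (strictMonoOn_weightEnumerator hw hS (inv_pos.2 hγ).le
    (rhoOf_mem_Ioc hw hS).1.le hlt).trans_eq (weightEnumerator_rhoOf hw hS)

lemma exists_one_lt_forall_weightEnumerator_mul_lt_one (w : A → ℕ) (x : ℝ) :
    ∃ η > 1, ∀ S, weightEnumerator w S x < 1 → weightEnumerator w S (η * x) < 1 := by
  have hevent : ∀ᶠ η in nhds (1 : ℝ), ∀ S,
      weightEnumerator w S x < 1 → weightEnumerator w S (η * x) < 1 := by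
    refine eventually_all.2 fun S ↦ eventually_imp_distrib_left.2 fun hS ↦ ?_
    have hcont : Continuous fun η ↦ weightEnumerator w S (η * x) :=
      continuous_weightEnumerator.comp (by fun_prop)
    exact hcont.continuousAt.eventually_lt continuousAt_const (by simpa using hS)
  obtain ⟨η, hη, hη1⟩ := ((hevent.filter_mono nhdsWithin_le_nhds).and
    (self_mem_nhdsWithin (s := Set.Ioi (1 : ℝ)))).exists
  exact ⟨η, hη1, hη⟩

end Fintype

end GrowthRate

section WordsOver

variable {A : Type*} {w : A → ℕ} {S : Set A}

/-- The words of weight `n` in `S*`. -/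
def wordsOver (w : A → ℕ) (S : Set A) (n : ℕ) : Set (List A) :=
  {V | (∀ a ∈ V, a ∈ S) ∧ wt w V = n}

lemma cons_mem_wordsOver {a : A} (ha : a ∈ S) {V : List A} {n : ℕ} (hn : w a ≤ n)
    (hV : V ∈ wordsOver w S (n - w a)) : a :: V ∈ wordsOver w S n := by
  refine ⟨List.forall_mem_cons.2 ⟨ha, hV.1⟩, ?_⟩
  rw [wt_cons, hV.2, Nat.add_sub_cancel' hn]

lemma replicate_mem_wordsOver {a : A} (ha : a ∈ S) (ha1 : w a = 1) (n : ℕ) :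
    List.replicate n a ∈ wordsOver w S n :=
  ⟨fun _ hb ↦ List.eq_of_mem_replicate hb ▸ ha, by simp [wt, ha1]⟩

lemma finite_wordsOver [Finite A] (hw : ∀ a, 0 < w a) (n : ℕ) : (wordsOver w S n).Finite :=
  (finite_setOf_wt_eq hw n).subset fun _ hV ↦ hV.2

lemma sum_ncard_wordsOver_le [Fintype A] (hw : ∀ a, 0 < w a) {n : ℕ} (hn : ∀ a ∈ S, w a ≤ n) :
    ∑ a with a ∈ S, (wordsOver w S (n - w a)).ncard ≤ (wordsOver w S n).ncard := by
  have hfin (m : ℕ) : (wordsOver w S m).Finite := finite_wordsOver hw m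
  simp only [Set.ncard_eq_toFinset_card _ (hfin _)]
  rw [← Finset.card_sigma]
  refine Finset.card_le_card_of_injOn (fun q ↦ q.1 :: q.2) ?_ ?_
  · rintro ⟨a, V⟩ hq
    simp only [Finset.mem_coe, Finset.mem_sigma, Finset.mem_filter_univ,
      Set.Finite.mem_toFinset] at hq ⊢
    exact cons_mem_wordsOver hq.1 (hn a hq.1) hq.2
  · rintro ⟨a, V⟩ _ ⟨b, U⟩ _ h
    simpa using h

lemma rhoOf_pow_le_ncard_wordsOver_mul [Finite A] (hw : ∀ a, 0 < w a) {one : A} (hone : w one = 1)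
    (hmem : one ∈ S) {M : ℕ} (hM : ∀ a ∈ S, w a ≤ M) (n : ℕ) :
    rhoOf w S ^ M ≤ (wordsOver w S n).ncard * rhoOf w S ^ n := by
  cases nonempty_fintype A
  have hS : S.Nonempty := ⟨one, hmem⟩
  obtain ⟨hρ0, hρ1⟩ := rhoOf_mem_Ioc hw hS
  have hρ := weightEnumerator_rhoOf hw hS
  set ρ := rhoOf w S
  induction n using Nat.strong_induction_on with
  | _ n ih =>
    rcases le_total n M with hnM | hMn
    · have hcard : (1 : ℝ) ≤ (wordsOver w S n).ncard := by
        exact_mod_cast (Set.ncard_pos (finite_wordsOver hw n)).2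
          ⟨_, replicate_mem_wordsOver hmem hone n⟩
      calc ρ ^ M ≤ ρ ^ n := pow_le_pow_of_le_one hρ0.le hρ1 hnM
        _ ≤ (wordsOver w S n).ncard * ρ ^ n := le_mul_of_one_le_left (by positivity) hcard
    have hn : ∀ a ∈ S, w a ≤ n := fun a ha ↦ (hM a ha).trans hMn
    have hletter : ∀ a ∈ S, ρ ^ w a * ρ ^ M ≤ (wordsOver w S (n - w a)).ncard * ρ ^ n := by
      intro a ha
      have ih_a := ih (n - w a) (Nat.sub_lt ((hw a).trans_le (hn a ha)) (hw a))
      calc ρ ^ w a * ρ ^ M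
          ≤ ρ ^ w a * ((wordsOver w S (n - w a)).ncard * ρ ^ (n - w a)) := by gcongr
        _ = (wordsOver w S (n - w a)).ncard * ρ ^ (w a + (n - w a)) := by ring
        _ = (wordsOver w S (n - w a)).ncard * ρ ^ n := by rw [Nat.add_sub_cancel' (hn a ha)]
    calc ρ ^ M = ∑ a with a ∈ S, ρ ^ w a * ρ ^ M := by
          rw [← Finset.sum_mul, ← weightEnumerator, hρ, one_mul]
      _ ≤ ∑ a with a ∈ S, ((wordsOver w S (n - w a)).ncard : ℝ) * ρ ^ n :=
          Finset.sum_le_sum fun a ha ↦ hletter a (by simpa using ha)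
      _ ≤ (wordsOver w S n).ncard * ρ ^ n := by
          rw [← Finset.sum_mul]
          gcongr
          exact_mod_cast sum_ncard_wordsOver_le hw hn

lemma exists_mul_growthOf_pow_le_ncard_wordsOver [Finite A] (hw : ∀ a, 0 < w a) {one : A}
    (hone : w one = 1) (hmem : one ∈ S) :
    ∃ c > 0, ∀ n : ℕ, c * growthOf w S ^ n ≤ (wordsOver w S n).ncard := by
  obtain ⟨M, hM⟩ := (Set.finite_range w).bddAbove
  have hρ0 : 0 < rhoOf w S := (rhoOf_mem_Ioc hw ⟨one, hmem⟩).1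
  refine ⟨rhoOf w S ^ M, by positivity, fun n ↦ ?_⟩
  rw [growthOf, inv_pow, ← div_eq_mul_inv, div_le_iff₀ (by positivity)]
  exact rhoOf_pow_le_ncard_wordsOver_mul hw hone hmem (fun a _ ↦ hM ⟨a, rfl⟩) n

end WordsOver

section PrefixState

variable {A : Type*} {w : A → ℕ}

lemma weight_pos (E : EmbeddingOrder A w) (a : A) : 0 < w a := by
  simpa using E.weight_lt (E.nil_le [a]) (by simp)

variable {E : EmbeddingOrder A w}

lemma append_le_append {U V X Y : List A} (hUX : E.le U X) (hVY : E.le V Y) :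
    E.le (U ++ V) (X ++ Y) := by
  obtain ⟨Us, hUs, rfl, hU⟩ := (E.le_iff_factor _ _).1 hUX
  obtain ⟨Vs, hVs, rfl, hV⟩ := (E.le_iff_factor _ _).1 hVY
  refine (E.le_iff_factor _ _).2 ⟨Us ++ Vs, by simp [hUs, hVs], List.flatten_append, ?_⟩
  rw [List.zip_append hUs]
  exact List.forall_mem_append.2 ⟨hU, hV⟩

lemma exists_eq_append_of_le_append {U X Y : List A} (h : E.le U (X ++ Y)) :
    ∃ U₁ U₂, U = U₁ ++ U₂ ∧ E.le U₁ X ∧ E.le U₂ Y := by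
  obtain ⟨Us, hlength, rfl, hUs⟩ := (E.le_iff_factor _ _).1 h
  rw [List.length_append] at hlength
  have hX : (Us.take X.length).length = X.length := by simp [hlength]
  have hY : (Us.drop X.length).length = Y.length := by simp [hlength]
  rw [← List.take_append_drop X.length Us, List.zip_append hX, List.forall_mem_append] at hUs
  refine ⟨(Us.take X.length).flatten, (Us.drop X.length).flatten, ?_, ?_, ?_⟩
  · rw [← List.flatten_append, List.take_append_drop]
  · exact (E.le_iff_factor _ _).2 ⟨_, hX, rfl, hUs.1⟩
  · exact (E.le_iff_factor _ _).2 ⟨_, hY, rfl, hUs.2⟩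

lemma le_append_iff {U X Y : List A} :
    E.le U (X ++ Y) ↔ ∃ k, E.le (U.take k) X ∧ E.le (U.drop k) Y := by
  constructor
  · intro h
    obtain ⟨U₁, U₂, rfl, h₁, h₂⟩ := exists_eq_append_of_le_append h
    exact ⟨U₁.length, by simpa using h₁, by simpa using h₂⟩
  · rintro ⟨k, h₁, h₂⟩
    simpa using append_le_append h₁ h₂

lemma le_append_right (X Y : List A) : E.le X (X ++ Y) := by
  simpa using append_le_append (E.le_refl X) (E.nil_le Y)

lemma le_append_left (X Y : List A) : E.le Y (X ++ Y) := by
  simpa using append_le_append (E.nil_le X) (E.le_refl Y)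

lemma take_le (k : ℕ) (W : List A) : E.le (W.take k) W := by
  simpa using le_append_right (E := E) (W.take k) (W.drop k)

variable {f : ℕ} {φ : Fin f → List A}

lemma mem_Cset_of_le {X Y : List A} (h : E.le X Y) (hY : Y ∈ E.Cset φ) : X ∈ E.Cset φ :=
  fun i hi ↦ hY i (E.le_trans hi h)

lemma bddAbove_setOf_take_le (X : List A) (i : Fin f) :
    BddAbove {p | p ≤ (φ i).length ∧ E.le ((φ i).take p) X} :=
  ⟨(φ i).length, fun _ hp ↦ hp.1⟩

lemma pstate_mem (X : List A) (i : Fin f) :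
    E.pstate φ X i ≤ (φ i).length ∧ E.le ((φ i).take (E.pstate φ X i)) X :=
  Nat.sSup_mem (s := {p | p ≤ (φ i).length ∧ E.le ((φ i).take p) X})
    ⟨0, by simp [E.nil_le]⟩ (bddAbove_setOf_take_le X i)

lemma take_le_iff_min_le_pstate {X : List A} {i : Fin f} {k : ℕ} :
    E.le ((φ i).take k) X ↔ min k (φ i).length ≤ E.pstate φ X i := by
  constructor
  · intro h
    exact le_csSup (bddAbove_setOf_take_le X i)
      ⟨min_le_right _ _, by rwa [← List.take_eq_take_min]⟩
  · intro h
    have htake := take_le (E := E) (min k (φ i).length) ((φ i).take (E.pstate φ X i))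
    rw [List.take_take, min_eq_left h, ← List.take_eq_take_min] at htake
    exact E.le_trans htake (pstate_mem X i).2

lemma pstate_mono {X Y : List A} (h : E.le X Y) : E.pstate φ X ≤ E.pstate φ Y := fun i ↦ by
  obtain ⟨hlength, htake⟩ := pstate_mem (E := E) (φ := φ) X i
  simpa [hlength] using take_le_iff_min_le_pstate.1 (E.le_trans htake h)

lemma mem_Cset_iff_pstate_lt {X : List A} :
    X ∈ E.Cset φ ↔ ∀ i, E.pstate φ X i < (φ i).length := by
  refine forall_congr' fun i ↦ ?_
  rw [← not_le, ← min_self (φ i).length, ← take_le_iff_min_le_pstate, List.take_length]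

lemma pstate_append_congr {X Y : List A} (h : E.pstate φ X = E.pstate φ Y) (V : List A) :
    E.pstate φ (X ++ V) = E.pstate φ (Y ++ V) := by
  have htake (i : Fin f) (k : ℕ) : E.le ((φ i).take k) X ↔ E.le ((φ i).take k) Y := by
    rw [take_le_iff_min_le_pstate, take_le_iff_min_le_pstate, h]
  funext i
  simp only [pstate, le_append_iff, List.take_take, htake]

lemma mem_stateLoopP_pstate {X : List A} {a : A} :
    a ∈ E.stateLoopP φ (E.pstate φ X) ↔ E.pstate φ (X ++ [a]) = E.pstate φ X :=
  ⟨fun ha ↦ ha X rfl, fun h _ hY ↦ (pstate_append_congr hY [a]).trans h⟩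

lemma mem_stateLoopP_pstate_of_le {X : List A} {a b : A} (hba : E.le [b] [a])
    (ha : a ∈ E.stateLoopP φ (E.pstate φ X)) : b ∈ E.stateLoopP φ (E.pstate φ X) := by
  rw [mem_stateLoopP_pstate] at ha ⊢
  refine (ha ▸ pstate_mono (append_le_append (E.le_refl X) hba)).antisymm ?_
  exact pstate_mono (le_append_right X [b])

lemma pstate_append_of_forall_mem_stateLoopP {X V : List A}
    (hV : ∀ a ∈ V, a ∈ E.stateLoopP φ (E.pstate φ X)) :
    E.pstate φ (X ++ V) = E.pstate φ X := by
  induction V with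
  | nil => rw [List.append_nil]
  | cons a V ih =>
    obtain ⟨ha, hV⟩ := List.forall_mem_cons.1 hV
    rw [List.append_cons, pstate_append_congr (mem_stateLoopP_pstate.1 ha), ih hV]

lemma append_mem_Cset_iff_of_forall_mem_stateLoopP {X V : List A}
    (hV : ∀ a ∈ V, a ∈ E.stateLoopP φ (E.pstate φ X)) :
    X ++ V ∈ E.Cset φ ↔ X ∈ E.Cset φ := by
  simp only [mem_Cset_iff_pstate_lt, pstate_append_of_forall_mem_stateLoopP hV]

variable (E φ)

/-- The sum of the components of the prefix state of `W`. It strictly increases along transitions,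
so it bounds the number of transitions in the prefix decomposition of `W`. -/
noncomputable def stateRank (W : List A) : ℕ := ∑ i, E.pstate φ W i

variable {E φ}

lemma stateRank_le (W : List A) : E.stateRank φ W ≤ ∑ i, (φ i).length :=
  Finset.sum_le_sum fun i _ ↦ (pstate_mem W i).1

lemma stateRank_lt_of_notMem_stateLoopP {W : List A} {a : A}
    (ha : a ∉ E.stateLoopP φ (E.pstate φ W)) : E.stateRank φ W < E.stateRank φ (W ++ [a]) := by
  have hlt : E.pstate φ W < E.pstate φ (W ++ [a]) :=
    (pstate_mono (le_append_right W [a])).lt_of_ne' fun h ↦ ha (mem_stateLoopP_pstate.2 h)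
  obtain ⟨hle, i, hi⟩ := Pi.lt_def.1 hlt
  exact Finset.sum_lt_sum (fun j _ ↦ hle j) ⟨i, Finset.mem_univ i, hi⟩

lemma stateRank_append_singleton_of_mem_stateLoopP {W : List A} {a : A}
    (ha : a ∈ E.stateLoopP φ (E.pstate φ W)) : E.stateRank φ (W ++ [a]) = E.stateRank φ W := by
  rw [stateRank, mem_stateLoopP_pstate.1 ha, stateRank]

lemma nondomWtP_append_singleton (W : List A) (a : A) :
    E.nondomWtP φ (W ++ [a]) = E.nondomWtP φ W +
      if a ∈ E.stateLoopP φ (E.pstate φ W) ∧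
        growthOf w (E.stateLoopP φ (E.pstate φ W)) ≠ E.gammaC φ then w a else 0 := by
  have hlength : (W ++ [a]).length = W.length + 1 := List.length_append
  simp only [mem_stateLoopP_pstate]
  rw [nondomWtP, ← Equiv.sum_comp (finCongr hlength.symm), Fin.sum_univ_castSucc]
  congr 1
  · refine Finset.sum_congr rfl fun i _ ↦ ?_
    have hi : (i : ℕ) + 1 ≤ W.length := i.2
    simp [List.take_append_of_le_length hi, List.take_append_of_le_length i.2.le]
  · have htake : (W ++ [a]).take (W.length + 1) = W ++ [a] := List.take_of_length_le hlength.le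
    simp [htake]

lemma nondomWtP_eq_zero_of_forall_growthOf_eq_gammaC
    (h : ∀ X ∈ E.Cset φ, growthOf w (E.stateLoopP φ (E.pstate φ X)) = E.gammaC φ)
    {W : List A} (hW : W ∈ E.Cset φ) : E.nondomWtP φ W = 0 :=
  Finset.sum_eq_zero fun i _ ↦ if_neg fun hi ↦ hi.2 (h _ (mem_Cset_of_le (take_le i W) hW))

end PrefixState

section DominantGrowth

variable {A : Type*} [Finite A] {w : A → ℕ} {E : EmbeddingOrder A w} {f : ℕ}
  {φ : Fin f → List A}

lemma finite_setOf_growthOf_stateLoopP :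
    {g : ℝ | ∃ X ∈ E.Cset φ, g = growthOf w (E.stateLoopP φ (E.pstate φ X))}.Finite :=
  (Set.finite_range (growthOf w)).subset fun _ ⟨_, _, hg⟩ ↦ ⟨_, hg.symm⟩

lemma growthOf_stateLoopP_le_gammaC {X : List A} (hX : X ∈ E.Cset φ) :
    growthOf w (E.stateLoopP φ (E.pstate φ X)) ≤ E.gammaC φ :=
  le_csSup finite_setOf_growthOf_stateLoopP.bddAbove ⟨X, hX, rfl⟩

lemma exists_growthOf_stateLoopP_eq_gammaC (hγ : E.gammaC φ ≠ 0) :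
    ∃ X ∈ E.Cset φ, (E.stateLoopP φ (E.pstate φ X)).Nonempty ∧
      growthOf w (E.stateLoopP φ (E.pstate φ X)) = E.gammaC φ := by
  have hne : {g : ℝ | ∃ X ∈ E.Cset φ,
      g = growthOf w (E.stateLoopP φ (E.pstate φ X))}.Nonempty := by
    rw [Set.nonempty_iff_ne_empty]
    intro h
    exact hγ (by rw [gammaC, h, Real.sSup_empty])
  obtain ⟨X, hX, hXγ⟩ := hne.csSup_mem finite_setOf_growthOf_stateLoopP
  refine ⟨X, hX, Set.nonempty_iff_ne_empty.2 fun h ↦ hγ ?_, hXγ.symm⟩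
  rw [gammaC, hXγ, h, growthOf_empty]

lemma nondomWtP_eq_zero_of_gammaC_eq_zero (hγ : E.gammaC φ = 0) {W : List A}
    (hW : W ∈ E.Cset φ) : E.nondomWtP φ W = 0 :=
  nondomWtP_eq_zero_of_forall_growthOf_eq_gammaC
    (fun _ hX ↦ (growthOf_stateLoopP_le_gammaC hX).antisymm (hγ.trans_le growthOf_nonneg)) hW

lemma exists_mul_gammaC_pow_le_ncard {one : A} (hone : w one = 1)
    (hone_le : ∀ a : A, E.le [one] [a]) (hγ : E.gammaC φ ≠ 0) :
    ∃ c > 0, ∀ n : ℕ, c * E.gammaC φ ^ n ≤ {W | W ∈ E.Cset φ ∧ wt w W = n}.ncard := by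
  obtain ⟨X, hX, ⟨a, ha⟩, hXγ⟩ := exists_growthOf_stateLoopP_eq_gammaC hγ
  obtain ⟨c, hc, hcount⟩ := exists_mul_growthOf_pow_le_ncard_wordsOver E.weight_pos hone
    (mem_stateLoopP_pstate_of_le (hone_le a) ha)
  rw [hXγ] at hcount
  refine ⟨c, hc, fun n ↦ (hcount n).trans (Nat.cast_le.2 ?_)⟩
  refine Set.ncard_le_ncard (fun V hV ↦ ⟨?_, hV.2⟩)
    ((finite_setOf_wt_eq E.weight_pos n).subset fun W hW ↦ hW.2)
  exact mem_Cset_of_le (le_append_left X V)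
    ((append_mem_Cset_iff_of_forall_mem_stateLoopP hV.1).2 hX)

end DominantGrowth

lemma one_add_mul_inv_pow_le_exp {x : ℝ} (hx : 0 ≤ x) (n : ℕ) :
    (1 + x * ((n : ℝ) + 1)⁻¹) ^ n ≤ Real.exp x := by
  have hle : n * (x * ((n : ℝ) + 1)⁻¹) ≤ x := by
    rw [← div_eq_mul_inv, mul_div_assoc', div_le_iff₀ (by positivity)]
    linarith
  calc (1 + x * ((n : ℝ) + 1)⁻¹) ^ n ≤ Real.exp (x * ((n : ℝ) + 1)⁻¹) ^ n := by
        gcongr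
        linarith [Real.add_one_le_exp (x * ((n : ℝ) + 1)⁻¹)]
    _ = Real.exp (n * (x * ((n : ℝ) + 1)⁻¹)) := (Real.exp_nat_mul _ _).symm
    _ ≤ Real.exp x := Real.exp_le_exp.2 hle

section Potential

variable {A : Type*} {w : A → ℕ} (E : EmbeddingOrder A w) {f : ℕ} (φ : Fin f → List A)

/-- The base whose `weight a`-th power is the factor contributed to `potential` by a letter `a` of
the loop block reached by `W`: letters of non-dominant blocks are tilted by `η`. -/
noncomputable def loopBase (η ρ : ℝ) (W : List A) : ℝ :=
  if growthOf w (E.stateLoopP φ (E.pstate φ W)) = E.gammaC φ then ρ else η * ρ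

/-- The product weight of a word of `C`: a factor `ρ` per unit of weight, a further factor `η` per
unit of weight lying in a non-dominant loop block, and a factor `t` per unit of rank. -/
noncomputable def potential (η ρ t : ℝ) (W : List A) : ℝ :=
  if W ∈ E.Cset φ then η ^ E.nondomWtP φ W * ρ ^ wt w W * t ^ E.stateRank φ W else 0

variable {E φ} {η ρ t : ℝ}

lemma potential_nonneg (hη : 0 ≤ η) (hρ : 0 ≤ ρ) (ht : 0 ≤ t) (W : List A) :
    0 ≤ E.potential φ η ρ t W := by
  unfold potential
  split_ifs <;> positivity

lemma potential_nil_le_one (ht : 0 ≤ t) (ht1 : t ≤ 1) : E.potential φ η ρ t [] ≤ 1 := by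
  unfold potential
  split_ifs
  · simpa [nondomWtP, wt] using pow_le_one₀ ht ht1
  · exact zero_le_one

lemma potential_append_singleton_of_mem {W : List A} {a : A}
    (ha : a ∈ E.stateLoopP φ (E.pstate φ W)) :
    E.potential φ η ρ t (W ++ [a]) = E.loopBase φ η ρ W ^ w a * E.potential φ η ρ t W := by
  have hC : W ++ [a] ∈ E.Cset φ ↔ W ∈ E.Cset φ :=
    append_mem_Cset_iff_of_forall_mem_stateLoopP (by simpa using ha)
  by_cases hW : W ∈ E.Cset φ
  · rw [potential, potential, if_pos (hC.2 hW), if_pos hW,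
      stateRank_append_singleton_of_mem_stateLoopP ha, nondomWtP_append_singleton, wt_append,
      loopBase]
    by_cases hdom : growthOf w (E.stateLoopP φ (E.pstate φ W)) = E.gammaC φ
    · simp [hdom, wt]
      ring
    · simp [hdom, ha, wt]
      ring
  · simp [potential, hC, hW]

lemma potential_append_singleton_le_of_notMem (hη : 0 ≤ η) (hρ : 0 ≤ ρ) (hρ1 : ρ ≤ 1)
    (ht : 0 ≤ t) (ht1 : t ≤ 1) {W : List A} {a : A} (ha : a ∉ E.stateLoopP φ (E.pstate φ W)) :
    E.potential φ η ρ t (W ++ [a]) ≤ t * E.potential φ η ρ t W := by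
  by_cases hWa : W ++ [a] ∈ E.Cset φ
  · have hW : W ∈ E.Cset φ := mem_Cset_of_le (le_append_right W [a]) hWa
    rw [potential, potential, if_pos hWa, if_pos hW, nondomWtP_append_singleton,
      if_neg fun h ↦ ha h.1, add_zero]
    have hweight : ρ ^ wt w (W ++ [a]) ≤ ρ ^ wt w W :=
      pow_le_pow_of_le_one hρ hρ1 (wt_append W [a] ▸ Nat.le_add_right _ _)
    have hrank : t ^ E.stateRank φ (W ++ [a]) ≤ t ^ (E.stateRank φ W + 1) :=
      pow_le_pow_of_le_one ht ht1 (stateRank_lt_of_notMem_stateLoopP ha)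
    calc η ^ E.nondomWtP φ W * ρ ^ wt w (W ++ [a]) * t ^ E.stateRank φ (W ++ [a])
        ≤ η ^ E.nondomWtP φ W * ρ ^ wt w W * t ^ (E.stateRank φ W + 1) := by gcongr
      _ = t * (η ^ E.nondomWtP φ W * ρ ^ wt w W * t ^ E.stateRank φ W) := by ring
  · rw [potential, if_neg hWa]
    exact mul_nonneg ht (potential_nonneg hη hρ ht W)

variable [Fintype A]

lemma sum_potential_append_singleton_le (hη : 0 ≤ η) (hρ : 0 ≤ ρ) (hρ1 : ρ ≤ 1) (ht : 0 ≤ t)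
    (ht1 : t ≤ 1) (hloop : ∀ X ∈ E.Cset φ,
      weightEnumerator w (E.stateLoopP φ (E.pstate φ X)) (E.loopBase φ η ρ X) ≤ 1) (W : List A) :
    ∑ a, E.potential φ η ρ t (W ++ [a]) ≤
      (1 + Fintype.card A * t) * E.potential φ η ρ t W := by
  set S := E.stateLoopP φ (E.pstate φ W)
  have hpot : 0 ≤ E.potential φ η ρ t W := potential_nonneg hη hρ ht W
  have hloops : ∑ a with a ∈ S, E.potential φ η ρ t (W ++ [a]) ≤ E.potential φ η ρ t W := by
    rw [Finset.sum_congr rfl fun a ha ↦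
      potential_append_singleton_of_mem (Finset.mem_filter_univ a |>.1 ha), ← Finset.sum_mul]
    by_cases hW : W ∈ E.Cset φ
    · exact mul_le_of_le_one_left hpot (hloop W hW)
    · simp [potential, hW]
  have htransitions : ∑ a with a ∉ S, E.potential φ η ρ t (W ++ [a]) ≤
      Fintype.card A * (t * E.potential φ η ρ t W) := by
    refine (Finset.sum_le_card_nsmul _ _ _ fun a ha ↦ potential_append_singleton_le_of_notMem
      hη hρ hρ1 ht ht1 (Finset.mem_filter_univ a |>.1 ha)).trans ?_
    rw [nsmul_eq_mul]
    gcongr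
    exact Finset.card_filter_le _ _
  rw [← Finset.sum_filter_add_sum_filter_not _ (· ∈ S)]
  linarith

lemma ncard_le_nondomWtP_mul_le (hη : 1 ≤ η) (hρ : 0 ≤ ρ) (hρ1 : ρ ≤ 1) (ht : 0 ≤ t)
    (ht1 : t ≤ 1) (hloop : ∀ X ∈ E.Cset φ,
      weightEnumerator w (E.stateLoopP φ (E.pstate φ X)) (E.loopBase φ η ρ X) ≤ 1)
    (n : ℕ) (s : ℝ) :
    {W | W ∈ E.Cset φ ∧ wt w W = n ∧ s ≤ E.nondomWtP φ W}.ncard *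
        (η ^ s * ρ ^ n * t ^ ∑ i, (φ i).length) ≤
      (n + 1) * (1 + Fintype.card A * t) ^ n := by
  have hη0 : 0 ≤ η := zero_le_one.trans hη
  have hfinite : {W | W ∈ E.Cset φ ∧ wt w W = n ∧ s ≤ E.nondomWtP φ W}.Finite :=
    (finite_setOf_wt_eq E.weight_pos n).subset fun W hW ↦ hW.2.1
  have hpotential : ∀ W ∈ hfinite.toFinset,
      η ^ s * ρ ^ n * t ^ ∑ i, (φ i).length ≤ E.potential φ η ρ t W := by
    intro W hW
    obtain ⟨hC, hwt, hs⟩ := hfinite.mem_toFinset.1 hW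
    have htilt : η ^ s ≤ η ^ E.nondomWtP φ W := by
      rw [← Real.rpow_natCast]
      exact Real.rpow_le_rpow_of_exponent_le hη hs
    have hrank : t ^ ∑ i, (φ i).length ≤ t ^ E.stateRank φ W :=
      pow_le_pow_of_le_one ht ht1 (stateRank_le W)
    rw [potential, if_pos hC, hwt]
    gcongr
  have hlength : ∀ W ∈ hfinite.toFinset, W.length ≤ n := fun W hW ↦
    (length_le_wt E.weight_pos W).trans_eq (hfinite.mem_toFinset.1 hW).2.1
  rw [Set.ncard_eq_toFinset_card _ hfinite, ← nsmul_eq_mul]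
  calc _ ≤ ∑ W ∈ hfinite.toFinset, E.potential φ η ρ t W :=
        Finset.card_nsmul_le_sum _ _ _ hpotential
    _ ≤ (n + 1) * ((1 + Fintype.card A * t) ^ n * E.potential φ η ρ t []) :=
        sum_le_mul_pow_mul_of_length_le (potential_nonneg hη0 hρ ht)
          (le_add_of_nonneg_right (by positivity))
          (sum_potential_append_singleton_le hη0 hρ hρ1 ht ht1 hloop) hlength
    _ ≤ (n + 1) * (1 + Fintype.card A * t) ^ n := by
        gcongr
        exact mul_le_of_le_one_right (by positivity) (potential_nil_le_one ht ht1)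

lemma ncard_le_nondomWtP_le (hη : 1 ≤ η) (hρ : 0 < ρ) (hρ1 : ρ ≤ 1)
    (hloop : ∀ X ∈ E.Cset φ,
      weightEnumerator w (E.stateLoopP φ (E.pstate φ X)) (E.loopBase φ η ρ X) ≤ 1)
    (n : ℕ) (s : ℝ) :
    {W | W ∈ E.Cset φ ∧ wt w W = n ∧ s ≤ E.nondomWtP φ W}.ncard ≤
      Real.exp (Fintype.card A) * ((n : ℝ) + 1) ^ (∑ i, (φ i).length + 1) *
        η ^ (-s) * ρ⁻¹ ^ n := by
  have hη0 : 0 < η := zero_lt_one.trans_le hη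
  have hn : (0 : ℝ) < n + 1 := by positivity
  have hbound := ncard_le_nondomWtP_mul_le hη hρ.le hρ1 (inv_nonneg.2 hn.le)
    (inv_le_one_of_one_le₀ (by simp)) hloop n s
  have hexp := one_add_mul_inv_pow_le_exp (Nat.cast_nonneg (α := ℝ) (Fintype.card A)) n
  rw [← le_div_iff₀ (by positivity)] at hbound
  calc _ ≤ _ := hbound
    _ ≤ (n + 1) * Real.exp (Fintype.card A) /
        (η ^ s * ρ ^ n * ((n : ℝ) + 1)⁻¹ ^ ∑ i, (φ i).length) := by gcongr
    _ = _ := by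
        simp only [Real.rpow_neg hη0.le, inv_pow, pow_succ]
        field_simp

end Potential

section TailBound

variable {A : Type*} {w : A → ℕ} {E : EmbeddingOrder A w} {f : ℕ} {φ : Fin f → List A}

lemma exists_forall_weightEnumerator_loopBase_le_one [Fintype A] (hγ : 0 < E.gammaC φ) :
    ∃ η > 1, ∀ X ∈ E.Cset φ, weightEnumerator w (E.stateLoopP φ (E.pstate φ X))
      (E.loopBase φ η (E.gammaC φ)⁻¹ X) ≤ 1 := by
  obtain ⟨η, hη, hlt⟩ := exists_one_lt_forall_weightEnumerator_mul_lt_one w (E.gammaC φ)⁻¹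
  refine ⟨η, hη, fun X hX ↦ ?_⟩
  have hle := growthOf_stateLoopP_le_gammaC hX
  by_cases hdom : growthOf w (E.stateLoopP φ (E.pstate φ X)) = E.gammaC φ
  · rw [loopBase, if_pos hdom]
    exact weightEnumerator_inv_le_one E.weight_pos hγ hle
  · rw [loopBase, if_neg hdom]
    exact (hlt _ (weightEnumerator_inv_lt_one E.weight_pos (hle.lt_of_ne hdom))).le

lemma one_le_gammaC [Finite A] (hγ : E.gammaC φ ≠ 0) : 1 ≤ E.gammaC φ := by
  obtain ⟨X, _, hne, hXγ⟩ := exists_growthOf_stateLoopP_eq_gammaC hγ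
  exact hXγ ▸ one_le_growthOf E.weight_pos hne

lemma ncard_le_nondomWtP_le_of_gammaC_eq_zero [Finite A] (hγ : E.gammaC φ = 0) {η : ℝ}
    (hη : 1 ≤ η) (n : ℕ) (s : ℝ) :
    ({W | W ∈ E.Cset φ ∧ wt w W = n ∧ s ≤ E.nondomWtP φ W}.ncard : ℝ) ≤
      η ^ (-s) * {W | W ∈ E.Cset φ ∧ wt w W = n}.ncard := by
  rcases le_or_gt s 0 with hs | hs
  · have hsub : {W | W ∈ E.Cset φ ∧ wt w W = n ∧ s ≤ E.nondomWtP φ W}.ncard ≤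
        {W | W ∈ E.Cset φ ∧ wt w W = n}.ncard :=
      Set.ncard_le_ncard (fun W hW ↦ ⟨hW.1, hW.2.1⟩)
        ((finite_setOf_wt_eq E.weight_pos n).subset fun W hW ↦ hW.2)
    exact (Nat.cast_le.2 hsub).trans (le_mul_of_one_le_left (Nat.cast_nonneg _)
      (Real.one_le_rpow hη (neg_nonneg.2 hs)))
  · have hempty : {W | W ∈ E.Cset φ ∧ wt w W = n ∧ s ≤ E.nondomWtP φ W} = ∅ := by
      refine Set.eq_empty_of_forall_notMem fun W ⟨hW, _, hsW⟩ ↦ hs.not_ge ?_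
      simpa [nondomWtP_eq_zero_of_gammaC_eq_zero hγ hW] using hsW
    rw [hempty, Set.ncard_empty, Nat.cast_zero]
    positivity

theorem exists_ncard_le_nondomWtP_le [Finite A] {one : A} (hone : w one = 1)
    (hone_le : ∀ a : A, E.le [one] [a]) :
    ∃ η > 1, ∃ c > 0, ∃ k : ℕ, ∀ (n : ℕ) (s : ℝ),
      ({W | W ∈ E.Cset φ ∧ wt w W = n ∧ s ≤ E.nondomWtP φ W}.ncard : ℝ) ≤
        c * ((n : ℝ) + 1) ^ k * η ^ (-s) * {W | W ∈ E.Cset φ ∧ wt w W = n}.ncard := by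
  cases nonempty_fintype A
  by_cases hγ : E.gammaC φ = 0
  · refine ⟨2, one_lt_two, 1, one_pos, 0, fun n s ↦ ?_⟩
    simpa using ncard_le_nondomWtP_le_of_gammaC_eq_zero hγ one_le_two n s
  have hγ1 := one_le_gammaC hγ
  have hγ0 : 0 < E.gammaC φ := zero_lt_one.trans_le hγ1
  obtain ⟨η, hη, hloop⟩ := exists_forall_weightEnumerator_loopBase_le_one hγ0
  obtain ⟨b, hb, hlower⟩ := exists_mul_gammaC_pow_le_ncard hone hone_le hγ
  refine ⟨η, hη, Real.exp (Fintype.card A) / b, by positivity, ∑ i, (φ i).length + 1,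
    fun n s ↦ ?_⟩
  have hupper := ncard_le_nondomWtP_le hη.le (inv_pos.2 hγ0) (inv_le_one_of_one_le₀ hγ1) hloop n s
  rw [inv_inv] at hupper
  have : 0 < η := zero_lt_one.trans hη
  calc _ ≤ _ := hupper
    _ = Real.exp (Fintype.card A) / b * ((n : ℝ) + 1) ^ (∑ i, (φ i).length + 1) * η ^ (-s) *
        (b * E.gammaC φ ^ n) := by field_simp
    _ ≤ _ := by gcongr; exact hlower n

end TailBound

lemma exists_add_one_pow_le_mul_exp_sqrt {b : ℝ} (hb : 0 < b) (k : ℕ) :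
    ∃ c > 0, ∀ x ≥ 0, (x + 1) ^ k ≤ c * Real.exp (b * √x) := by
  refine ⟨(2 * k).factorial * Real.exp b / b ^ (2 * k), by positivity, fun x hx ↦ ?_⟩
  have hsq : x + 1 ≤ (√x + 1) ^ 2 := by
    linarith [Real.sq_sqrt hx, Real.sqrt_nonneg x, add_sq (√x) 1]
  have hexp := Real.pow_div_factorial_le_exp (b * (√x + 1)) (by positivity) (2 * k)
  rw [div_le_iff₀ (by positivity)] at hexp
  calc (x + 1) ^ k ≤ ((√x + 1) ^ 2) ^ k := by gcongr
    _ = (b * (√x + 1)) ^ (2 * k) / b ^ (2 * k) := by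
        rw [mul_pow, ← pow_mul]
        field_simp
    _ ≤ Real.exp (b * (√x + 1)) * (2 * k).factorial / b ^ (2 * k) := by gcongr
    _ = (2 * k).factorial * Real.exp b / b ^ (2 * k) * Real.exp (b * √x) := by
        rw [mul_add, mul_one, Real.exp_add]
        ring

lemma exists_add_one_pow_mul_rpow_neg_sqrt_le {η : ℝ} (hη : 1 < η) (k : ℕ) :
    ∃ c > 0, ∃ δ > 0, ∀ x ≥ 0, (x + 1) ^ k * η ^ (-√x) ≤ c * 2 ^ (-δ * √x) := by
  have hlog : 0 < Real.log η := Real.log_pos hη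
  have : 0 < Real.log 2 := Real.log_pos one_lt_two
  obtain ⟨c, hc, hpow⟩ := exists_add_one_pow_le_mul_exp_sqrt (half_pos hlog) k
  refine ⟨c, hc, Real.log η / 2 / Real.log 2, by positivity, fun x hx ↦ ?_⟩
  calc (x + 1) ^ k * η ^ (-√x)
      ≤ c * Real.exp (Real.log η / 2 * √x) * η ^ (-√x) := by gcongr; exact hpow x hx
    _ = c * Real.exp (Real.log η / 2 * √x + Real.log η * -√x) := by
        rw [Real.rpow_def_of_pos (by positivity), mul_assoc, ← Real.exp_add]
    _ = c * 2 ^ (-(Real.log η / 2 / Real.log 2) * √x) := by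
        rw [Real.rpow_def_of_pos two_pos]
        congr 2
        field_simp
        ring

end EmbeddingOrder

theorem nondominant_weight_small_general {A : Type*} [Finite A] {w : A → ℕ}
    (E : EmbeddingOrder A w) {f : ℕ} (φ : Fin f → List A)
    {one : A} (hone : w one = 1) (hone_le : ∀ a : A, E.le [one] [a]) :
    ∃ c δ : ℝ, 0 < c ∧ 0 < δ ∧ ∀ n : ℕ,
      (Set.ncard {W : List A | W ∈ E.Cset φ ∧ wt w W = n ∧
          ¬ ((E.nondomWtP φ W : ℝ) < Real.sqrt n)} : ℝ)
        ≤ c * 2 ^ (-δ * Real.sqrt n) *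
          (Set.ncard {W : List A | W ∈ E.Cset φ ∧ wt w W = n} : ℝ) := by
  obtain ⟨η, hη, b, hb, k, htail⟩ := exists_ncard_le_nondomWtP_le (φ := φ) hone hone_le
  obtain ⟨c, hc, δ, hδ, habsorb⟩ := exists_add_one_pow_mul_rpow_neg_sqrt_le hη k
  refine ⟨b * c, δ, by positivity, hδ, fun n ↦ ?_⟩
  simp only [not_lt]
  calc _ ≤ _ := htail n √n
    _ = b * (((n : ℝ) + 1) ^ k * η ^ (-√(n : ℝ))) *
        {W | W ∈ E.Cset φ ∧ wt w W = n}.ncard := by ring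
    _ ≤ b * (c * 2 ^ (-δ * √(n : ℝ))) * {W | W ∈ E.Cset φ ∧ wt w W = n}.ncard := by
        gcongr b * ?_ * _
        exact habsorb n (Nat.cast_nonneg n)
    _ = _ := by ring

/-- **Lemma `lem-nondom`.**  Let `W` be a uniformly random word from `C_n`.  With
probability `1 − 2^{−Ω(√n)}`, the total weight of the non-dominant loop blocks in the
prefix decomposition of `W` is smaller than `√n`.  (Stated by counting: the number of
weight-`n` words of `C` failing this is at most `c·2^{−δ√n}·|C_n|`.) -/
theorem nondominant_weight_small {A : Type*} [Fintype A] {w : A → ℕ}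
    (E : EmbeddingOrder A w) {f : ℕ} (φ : Fin f → List A)
    (hw : ∀ a, 0 < w a)
    (one : A) (hone : w one = 1) (hone_le : ∀ a : A, E.le [one] [a])
    (hf : 0 < f) (hφne : ∀ i, φ i ≠ [])
    (hφmin : ∀ i ψ, E.le ψ (φ i) → ψ ≠ φ i → ψ ∈ E.Cset φ)
    (hunb : ¬ ∃ M : ℕ, ∀ n : ℕ,
      Set.ncard {W : List A | W ∈ E.Cset φ ∧ EmbeddingOrder.wt w W = n} ≤ M)
    : ∃ c δ : ℝ, 0 < c ∧ 0 < δ ∧ ∀ n : ℕ,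
      (Set.ncard {W : List A | W ∈ E.Cset φ ∧ wt w W = n ∧
          ¬ ((E.nondomWtP φ W : ℝ) < Real.sqrt n)} : ℝ)
        ≤ c * 2 ^ (-δ * Real.sqrt n) *
          (Set.ncard {W : List A | W ∈ E.Cset φ ∧ wt w W = n} : ℝ) := by
  exact nondominant_weight_small_general E φ hone hone_le
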